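/- The class of unary MSO queries on ordered unranked Σ-trees is precisely the class of unary queries defined by formulas of the full μ-calculus L_μ^full (the μ-calculus extended with backward modalities) over the two binary relations ≺_ch (child) and ≺_ns (next sibling). -/

import Mathlib

/-!
A least fixed point is the intersection of all prefixed sets, and child and next sibling are the
covering relations of the two orders, so the μ-calculus translates into MSO.

Conversely, reading first children and next siblings as left and right successors turns an unranked
tree into a binary one, on which every MSO formula is equivalent to a bottom-up automaton. To decide
whether such an automaton accepts when the node `s` is the only one marked, it suffices to know the
states at the successors of `s` and the *context* of `s`: the set of states at `s` from which the
automaton goes on to accept at the root. Unmarked states are determined bottom-up and contexts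
top-down by finitely many equations that are positive in the unknown sets of nodes and use only the
forward and backward modalities. As trees are finite and well-founded, any solution of these
equations is the intended one; a solution consisting of μ-calculus formulas is provided by Bekić's
principle, which eliminates the unknowns one by one.
-/

namespace UnrankedTrees

/-! ### Unranked trees: tree domains and ordered unranked Σ-trees.
Nodes are finite strings over ℕ; a tree domain is a finite prefix-closed set
of nodes such that `s ++ [i] ∈ D` implies `s ++ [j] ∈ D` for all `j < i`. -/

abbrev Node : Type := List ℕ

/-- An ordered unranked tree over alphabet `A`: a tree domain with a labeling. -/
structure UTree (A : Type) where
  dom : Finset Node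
  nil_mem : ([] : Node) ∈ dom
  prefix_closed : ∀ ⦃s t : Node⦄, s ∈ dom → t <+: s → t ∈ dom
  sib_closed : ∀ ⦃s : Node⦄ ⦃i j : ℕ⦄, s ++ [i] ∈ dom → j < i → s ++ [j] ∈ dom
  label : Node → A

namespace UTree

variable {A : Type}

/-- The child relation `≺_ch`. -/
def childR (T : UTree A) (s t : Node) : Prop :=
  s ∈ T.dom ∧ t ∈ T.dom ∧ ∃ i : ℕ, t = s ++ [i]

/-- The descendant-or-self relation `≺*_ch` (the prefix relation). -/
def descR (T : UTree A) (s t : Node) : Prop :=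
  s ∈ T.dom ∧ t ∈ T.dom ∧ s <+: t

/-- The next-sibling relation `≺_ns`. -/
def nsR (T : UTree A) (s t : Node) : Prop :=
  s ∈ T.dom ∧ t ∈ T.dom ∧ ∃ (u : Node) (i : ℕ), s = u ++ [i] ∧ t = u ++ [i + 1]

/-- The sibling ordering `≺*_ns` (reflexive-transitive closure of next-sibling). -/
def sibR (T : UTree A) (s t : Node) : Prop :=
  s ∈ T.dom ∧ t ∈ T.dom ∧ ∃ (u : Node) (i j : ℕ), s = u ++ [i] ∧ t = u ++ [j] ∧ i ≤ j

/-- The first-child relation `≺_fc`. -/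
def firstChildR (T : UTree A) (s t : Node) : Prop :=
  s ∈ T.dom ∧ t ∈ T.dom ∧ t = s ++ [0]

/-- The number of children of a node. -/
noncomputable def childCount (T : UTree A) (s : Node) : ℕ :=
  Set.ncard {i : ℕ | s ++ [i] ∈ T.dom}

/-- The list of children of a node `s`, in sibling order: `s·0, …, s·(n-1)`. -/
noncomputable def childrenList (T : UTree A) (s : Node) : List Node :=
  (List.range (T.childCount s)).map fun i => s ++ [i]

/-- `s` is a leaf of `T`. -/
def isLeaf (T : UTree A) (s : Node) : Prop :=
  s ∈ T.dom ∧ ∀ i : ℕ, s ++ [i] ∉ T.dom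

/-- `s` has no next sibling in `T` (the root also counts as "last"). -/
def isLast (T : UTree A) (s : Node) : Prop :=
  s = [] ∨ ∃ (u : Node) (i : ℕ), s = u ++ [i] ∧ u ++ [i + 1] ∉ T.dom

end UTree

/-! ### MSO over ordered unranked trees.
First-order variables and monadic second-order variables are indexed by ℕ.
First-order quantifiers range over the nodes of the tree, set quantifiers over
sets of nodes of the tree. -/

inductive MSO (A : Type) : Type where
  | eq : ℕ → ℕ → MSO A
  | desc : ℕ → ℕ → MSO A               -- x ≺*_ch y
  | sib : ℕ → ℕ → MSO A                -- x ≺*_ns y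
  | lab : A → ℕ → MSO A                -- P_a(x)
  | mem : ℕ → ℕ → MSO A                -- X(x)
  | not : MSO A → MSO A
  | and : MSO A → MSO A → MSO A
  | exFO : ℕ → MSO A → MSO A
  | exSO : ℕ → MSO A → MSO A

namespace MSO

variable {A : Type}

def Sat (T : UTree A) (v : ℕ → Node) (V : ℕ → Set Node) : MSO A → Prop
  | .eq x y => v x = v y
  | .desc x y => T.descR (v x) (v y)
  | .sib x y => T.sibR (v x) (v y)
  | .lab a x => v x ∈ T.dom ∧ T.label (v x) = a
  | .mem X x => v x ∈ V X
  | .not φ => ¬ Sat T v V φ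
  | .and φ ψ => Sat T v V φ ∧ Sat T v V ψ
  | .exFO n φ => ∃ s ∈ T.dom, Sat T (Function.update v n s) V φ
  | .exSO n φ => ∃ S : Set Node, S ⊆ ↑T.dom ∧ Sat T v (Function.update V n S) φ

/-- `φ`, as a sentence, defines the set `L` of trees.  (Quantifying over all
valuations forces the truth value to be independent of the valuation, i.e.
`φ` behaves as a sentence.) -/
def DefinesB (φ : MSO A) (L : Set (UTree A)) : Prop :=
  ∀ (T : UTree A) (v : ℕ → Node) (V : ℕ → Set Node), T ∈ L ↔ Sat T v V φ

/-- `φ`, as a formula whose only free variable is the first-order variable `0`,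
defines the unary query `Q`. -/
def DefinesU (φ : MSO A) (Q : UTree A → Set Node) : Prop :=
  ∀ (T : UTree A) (v : ℕ → Node) (V : ℕ → Set Node) (s : Node), s ∈ T.dom →
    (s ∈ Q T ↔ Sat T (Function.update v 0 s) V φ)

end MSO

/-! ### The modal μ-calculus over trees, with relation symbols drawn from `R`
(and optional backward modalities). Set variables are indexed by ℕ. -/

inductive MuForm (A R : Type) : Type where
  | lab : A → MuForm A R
  | var : ℕ → MuForm A R
  | or : MuForm A R → MuForm A R → MuForm A R
  | not : MuForm A R → MuForm A R
  | dia : R → MuForm A R → MuForm A R        -- ◇(E_r) φ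
  | diaB : R → MuForm A R → MuForm A R       -- ◇(E_r⁻) φ (backward modality)
  | mu : ℕ → MuForm A R → MuForm A R

namespace MuForm

variable {A R : Type}

/-- Polarity check: `pol n φ true` says every free occurrence of the set
variable `n` in `φ` is positive (`false`: negative). -/
def pol (n : ℕ) : MuForm A R → Bool → Prop
  | .lab _, _ => True
  | .var k, b => b = true ∨ k ≠ n
  | .or φ ψ, b => pol n φ b ∧ pol n ψ b
  | .not φ, b => pol n φ (!b)
  | .dia _ φ, b => pol n φ b
  | .diaB _ φ, b => pol n φ b
  | .mu k φ, b => k = n ∨ pol n φ b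

/-- Well-formedness: in every subformula `μX.φ`, `X` occurs only positively. -/
def WF : MuForm A R → Prop
  | .lab _ => True
  | .var _ => True
  | .or φ ψ => WF φ ∧ WF ψ
  | .not φ => WF φ
  | .dia _ φ => WF φ
  | .diaB _ φ => WF φ
  | .mu k φ => pol k φ true ∧ WF φ

/-- `φ` contains no backward modality (plain μ-calculus `L_μ`). -/
def NoBack : MuForm A R → Prop
  | .lab _ => True
  | .var _ => True
  | .or φ ψ => NoBack φ ∧ NoBack ψ
  | .not φ => NoBack φ
  | .dia _ φ => NoBack φ
  | .diaB _ _ => False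
  | .mu _ φ => NoBack φ

/-- Semantics: the set of nodes of `T` at which a formula holds, where `rel`
interprets the relation symbols. -/
def sem (T : UTree A) (rel : R → Node → Node → Prop) (V : ℕ → Set Node) :
    MuForm A R → Set Node
  | .lab a => {s | s ∈ T.dom ∧ T.label s = a}
  | .var n => V n
  | .or φ ψ => sem T rel V φ ∪ sem T rel V ψ
  | .not φ => {s | s ∈ T.dom ∧ s ∉ sem T rel V φ}
  | .dia r φ => {s | s ∈ T.dom ∧ ∃ t : Node, rel r s t ∧ t ∈ sem T rel V φ}
  | .diaB r φ => {s | s ∈ T.dom ∧ ∃ t : Node, rel r t s ∧ t ∈ sem T rel V φ}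
  | .mu n φ =>
      {s | ∀ P : Set Node, sem T rel (Function.update V n P) φ ⊆ P → s ∈ P}

end MuForm

/-- The two relations of statement 7: child and next sibling. -/
inductive ChNs : Type where
  | ch : ChNs
  | ns : ChNs

def ChNs.rel {A : Type} (T : UTree A) : ChNs → Node → Node → Prop
  | .ch => T.childR
  | .ns => T.nsR

/-! ### From the μ-calculus to MSO -/

section MuToMSO

variable {A : Type}

/-- `t` is an immediate successor of `s` for the reflexive order `R`. -/
def Covers (R : Node → Node → Prop) (s t : Node) : Prop :=
  R s t ∧ s ≠ t ∧ ∀ z, R s z → R z t → z = s ∨ z = t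

namespace UTree

lemma sib_mem_of_le (T : UTree A) {s : Node} {i j : ℕ} (h : s ++ [j] ∈ T.dom) (hij : i ≤ j) :
    s ++ [i] ∈ T.dom := by
  rcases hij.eq_or_lt with rfl | hlt
  · exact h
  · exact T.sib_closed h hlt

lemma childR_iff_covers (T : UTree A) (s t : Node) : T.childR s t ↔ Covers T.descR s t := by
  constructor
  · rintro ⟨hs, ht, i, rfl⟩
    refine ⟨⟨hs, ht, List.prefix_append _ _⟩, by simp, ?_⟩
    rintro z ⟨-, -, hsz⟩ ⟨-, -, hzt⟩
    rcases List.prefix_concat_iff.1 hzt with h | h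
    · exact .inr h
    · exact .inl (h.eq_of_length (le_antisymm h.length_le hsz.length_le))
  · rintro ⟨⟨hs, ht, w, rfl⟩, hne, hmin⟩
    obtain _ | ⟨i, w⟩ := w
    · simp at hne
    have hpre : s ++ [i] <+: s ++ i :: w := ⟨w, by simp⟩
    have hmid : s ++ [i] ∈ T.dom := T.prefix_closed ht hpre
    have := hmin (s ++ [i]) ⟨hs, hmid, List.prefix_append _ _⟩ ⟨hmid, ht, hpre⟩
    exact ⟨hs, ht, i, by simpa using this⟩

lemma nsR_iff_covers (T : UTree A) (s t : Node) : T.nsR s t ↔ Covers T.sibR s t := by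
  constructor
  · rintro ⟨hs, ht, u, i, rfl, rfl⟩
    refine ⟨⟨hs, ht, u, i, i + 1, rfl, rfl, by omega⟩, by simp, ?_⟩
    rintro z ⟨-, -, u₁, i₁, j₁, hs₁, rfl, h₁⟩ ⟨-, -, u₂, i₂, j₂, hz₂, ht₂, h₂⟩
    simp only [List.append_singleton_inj] at hs₁ hz₂ ht₂ ⊢
    obtain ⟨⟨rfl, rfl⟩, ⟨rfl, rfl⟩, -, rfl⟩ := And.intro hs₁ (And.intro hz₂ ht₂)
    simp only [true_and]
    omega
  · rintro ⟨⟨hs, ht, u, i, j, rfl, rfl, hij⟩, hne, hmin⟩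
    have hlt : i < j := hij.lt_of_ne fun h => hne (h ▸ rfl)
    have hmid : u ++ [i + 1] ∈ T.dom := T.sib_mem_of_le ht hlt
    have := hmin (u ++ [i + 1]) ⟨hs, hmid, u, i, i + 1, rfl, rfl, by omega⟩
      ⟨hmid, ht, u, i + 1, j, rfl, rfl, hlt⟩
    simp only [List.append_singleton_inj, true_and] at this
    exact ⟨hs, ht, u, i, rfl, by rw [this.resolve_left (by omega)]⟩

end UTree

lemma ChNs.rel_mem_dom {T : UTree A} {r : ChNs} {s t : Node} (h : ChNs.rel T r s t) :
    s ∈ T.dom ∧ t ∈ T.dom := by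
  cases r <;> exact ⟨h.1, h.2.1⟩

namespace MSO

/-- `y` covers `x` for the order defined by `ρ`; the variable `z` is bound. -/
def covers (ρ : ℕ → ℕ → MSO A) (x y z : ℕ) : MSO A :=
  .and (ρ x y) (.and (.not (.eq x y))
    (.not (.exFO z (.and (ρ x z) (.and (ρ z y) (.and (.not (.eq z x)) (.not (.eq z y))))))))

lemma sat_covers {T : UTree A} {ρ : ℕ → ℕ → MSO A} {R : Node → Node → Prop}
    (hρ : ∀ x y v V, Sat T v V (ρ x y) ↔ R (v x) (v y)) (hR : ∀ s t, R s t → s ∈ T.dom)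
    {x y z : ℕ} (hx : x ≠ z) (hy : y ≠ z) (v : ℕ → Node) (V : ℕ → Set Node) :
    Sat T v V (covers ρ x y z) ↔ Covers R (v x) (v y) := by
  simp only [covers, Sat, hρ, Covers, Function.update_self, Function.update_of_ne hx,
    Function.update_of_ne hy]
  grind

/-- The formula expressing `ChNs.rel r` between `x` and `y`; the variable `z` is bound. -/
def chNs : ChNs → ℕ → ℕ → ℕ → MSO A
  | .ch => covers .desc
  | .ns => covers .sib

lemma sat_chNs {T : UTree A} (r : ChNs) {x y z : ℕ} (hx : x ≠ z) (hy : y ≠ z) (v : ℕ → Node)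
    (V : ℕ → Set Node) : Sat T v V (chNs r x y z) ↔ ChNs.rel T r (v x) (v y) := by
  cases r
  · exact (sat_covers (fun _ _ _ _ => Iff.rfl) (fun _ _ h => h.1) hx hy v V).trans
      (T.childR_iff_covers _ _).symm
  · exact (sat_covers (fun _ _ _ _ => Iff.rfl) (fun _ _ h => h.1) hx hy v V).trans
      (T.nsR_iff_covers _ _).symm

end MSO

namespace MuForm

section Locality

lemma forall_prefixed_mem_iff {α : Type*} {D : Set α} {F : Set α → Set α}
    (hF : ∀ P P' : Set α, (∀ t ∈ D, t ∈ P ↔ t ∈ P') → ∀ t ∈ D, t ∈ F P ↔ t ∈ F P')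
    {s : α} (hs : s ∈ D) :
    (∀ P, F P ⊆ P → s ∈ P) ↔ ∀ P ⊆ D, (∀ t ∈ D, t ∈ F P → t ∈ P) → s ∈ P := by
  constructor
  · intro h P _ hP
    refine (h (P ∪ Dᶜ) fun t ht => ?_).resolve_right (not_not.2 hs)
    by_cases htD : t ∈ D
    · exact .inl (hP t htD ((hF _ P (by simp +contextual) t htD).1 ht))
    · exact .inr htD
  · intro h P hP
    exact (h (P ∩ D) Set.inter_subset_right fun t htD ht =>
      ⟨hP ((hF _ P (by simp +contextual) t htD).1 ht), htD⟩).1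

variable {R : Type} {T : UTree A} {rel : R → Node → Node → Prop}

lemma mem_update_congr {V W : ℕ → Set Node} (h : ∀ n, ∀ s ∈ T.dom, s ∈ V n ↔ s ∈ W n) (n : ℕ)
    {P P' : Set Node} (hP : ∀ s ∈ T.dom, s ∈ P ↔ s ∈ P') (m : ℕ) :
    ∀ s ∈ T.dom, s ∈ Function.update V n P m ↔ s ∈ Function.update W n P' m := by
  rcases eq_or_ne m n with rfl | hm
  · simpa using hP
  · simpa [Function.update_of_ne hm] using h m

lemma mem_sem_congr (hrel : ∀ r s t, rel r s t → s ∈ T.dom ∧ t ∈ T.dom) (φ : MuForm A R)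
    {V W : ℕ → Set Node} (h : ∀ n, ∀ s ∈ T.dom, s ∈ V n ↔ s ∈ W n) {s : Node} (hs : s ∈ T.dom) :
    s ∈ φ.sem T rel V ↔ s ∈ φ.sem T rel W := by
  induction φ generalizing V W s with
  | lab a => rfl
  | var n => exact h n s hs
  | or φ ψ ihφ ihψ => exact or_congr (ihφ h hs) (ihψ h hs)
  | not φ ih => exact and_congr_right fun _ => not_congr (ih h hs)
  | dia r φ ih =>
    exact and_congr_right fun _ => exists_congr fun t => and_congr_right fun ht =>
      ih h (hrel _ _ _ ht).2
  | diaB r φ ih =>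
    exact and_congr_right fun _ => exists_congr fun t => and_congr_right fun ht =>
      ih h (hrel _ _ _ ht).1
  | mu n φ ih =>
    have hF (V : ℕ → Set Node) (P P' : Set Node) (hP : ∀ t ∈ (T.dom : Set Node), t ∈ P ↔ t ∈ P')
        (t) (ht : t ∈ (T.dom : Set Node)) :=
      ih (mem_update_congr (fun m s _ => Iff.rfl (a := s ∈ V m)) n hP) ht
    refine (forall_prefixed_mem_iff (hF V) hs).trans <|
      .trans ?_ (forall_prefixed_mem_iff (hF W) hs).symm
    exact forall₂_congr fun P _ => imp_congr_left <| forall₂_congr fun t ht => imp_congr_left <|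
      ih (mem_update_congr h n fun _ _ => Iff.rfl) ht

lemma mem_sem_mu_iff (hrel : ∀ r s t, rel r s t → s ∈ T.dom ∧ t ∈ T.dom) (n : ℕ) (φ : MuForm A R)
    (V : ℕ → Set Node) {s : Node} (hs : s ∈ T.dom) :
    s ∈ (mu n φ).sem T rel V ↔ ∀ P : Set Node, P ⊆ ↑T.dom →
      (∀ t ∈ T.dom, t ∈ φ.sem T rel (Function.update V n P) → t ∈ P) → s ∈ P :=
  forall_prefixed_mem_iff (fun _ _ hP _ ht =>
    mem_sem_congr hrel φ (mem_update_congr (fun _ _ _ => Iff.rfl) n hP) ht) hs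

end Locality

/-- The standard translation into MSO, with `x` as the variable for the current node and
`x + 1`, `x + 2` fresh; a least fixed point becomes membership in every prefixed set. -/
def toMSO : MuForm A ChNs → ℕ → MSO A
  | .lab a, x => .lab a x
  | .var n, x => .mem n x
  | .or φ ψ, x => .not (.and (.not (toMSO φ x)) (.not (toMSO ψ x)))
  | .not φ, x => .not (toMSO φ x)
  | .dia r φ, x => .exFO (x + 1) (.and (.chNs r x (x + 1) (x + 2)) (toMSO φ (x + 1)))
  | .diaB r φ, x => .exFO (x + 1) (.and (.chNs r (x + 1) x (x + 2)) (toMSO φ (x + 1)))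
  | .mu n φ, x => .not (.exSO n (.and
      (.not (.exFO (x + 1) (.and (toMSO φ (x + 1)) (.not (.mem n (x + 1))))))
      (.not (.mem n x))))

lemma sat_toMSO (T : UTree A) (φ : MuForm A ChNs) (x : ℕ) {v : ℕ → Node} (V : ℕ → Set Node)
    {s : Node} (hv : v x = s) (hs : s ∈ T.dom) :
    MSO.Sat T v V (φ.toMSO x) ↔ s ∈ φ.sem T (ChNs.rel T) V := by
  induction φ generalizing x v V s with
  | lab a => subst hv; rfl
  | var n => subst hv; rfl
  | or φ ψ ihφ ihψ =>
    simp only [toMSO, MSO.Sat, ihφ x V hv hs, ihψ x V hv hs, sem, Set.mem_union]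
    tauto
  | not φ ih => simp only [toMSO, MSO.Sat, ih x V hv hs, sem, Set.mem_ofPred_eq, hs, true_and]
  | dia r φ ih =>
    have hφ (t) := ih (x + 1) V (s := t) (v := Function.update v (x + 1) t) (by simp)
    simp only [toMSO, MSO.Sat, sem, Set.mem_ofPred_eq, hs, true_and,
      MSO.sat_chNs r (show x ≠ x + 2 by omega) (show x + 1 ≠ x + 2 by omega),
      Function.update_self, Function.update_of_ne (show x ≠ x + 1 by omega), hv]
    exact exists_congr fun t => ⟨fun ⟨ht, hr, h⟩ => ⟨hr, (hφ t ht).1 h⟩,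
      fun ⟨hr, h⟩ => have ht := (ChNs.rel_mem_dom hr).2; ⟨ht, hr, (hφ t ht).2 h⟩⟩
  | diaB r φ ih =>
    have hφ (t) := ih (x + 1) V (s := t) (v := Function.update v (x + 1) t) (by simp)
    simp only [toMSO, MSO.Sat, sem, Set.mem_ofPred_eq, hs, true_and,
      MSO.sat_chNs r (show x + 1 ≠ x + 2 by omega) (show x ≠ x + 2 by omega),
      Function.update_self, Function.update_of_ne (show x ≠ x + 1 by omega), hv]
    exact exists_congr fun t => ⟨fun ⟨ht, hr, h⟩ => ⟨hr, (hφ t ht).1 h⟩,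
      fun ⟨hr, h⟩ => have ht := (ChNs.rel_mem_dom hr).1; ⟨ht, hr, (hφ t ht).2 h⟩⟩
  | mu n φ ih =>
    have hφ (P) (t) := ih (x + 1) (Function.update V n P) (s := t)
      (v := Function.update v (x + 1) t) (by simp)
    rw [mem_sem_mu_iff (fun _ _ _ => ChNs.rel_mem_dom) n φ V hs]
    simp only [toMSO, MSO.Sat, Function.update_self, hv]
    grind

end MuForm

end MuToMSO

/-! ### The first-child / next-sibling encoding -/

section BinaryNavigation

variable {A : Type}

open Relation

/-- The `R`-successor of `s`, if there is one; meant for functional relations. -/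
noncomputable def successor? {α : Type*} (R : α → α → Prop) (s : α) : Option α :=
  open Classical in if h : ∃ t, R s t then some h.choose else none

lemma successor?_eq_some {α : Type*} {R : α → α → Prop} (hR : Relator.RightUnique R) {s t : α} :
    successor? R s = some t ↔ R s t := by
  unfold successor?
  split_ifs with h
  · exact ⟨fun e => Option.some_inj.1 e ▸ h.choose_spec,
      fun ht => congrArg some (hR h.choose_spec ht)⟩
  · exact iff_of_false nofun fun ht => h ⟨t, ht⟩

/-- The distance from the root in the first-child / next-sibling encoding. -/
def Node.weight (s : Node) : ℕ :=
  s.length + s.sum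

namespace UTree

variable (T : UTree A)

/-- The successor relation of the binary tree that encodes `T`: left successors are first children,
right successors are next siblings. -/
def succR (s t : Node) : Prop :=
  T.firstChildR s t ∨ T.nsR s t

/-- The left successor of a node in the binary encoding. -/
noncomputable def left : Node → Option Node :=
  successor? T.firstChildR

/-- The right successor of a node in the binary encoding. -/
noncomputable def right : Node → Option Node :=
  successor? T.nsR

variable {T}

lemma left_eq_some {s t : Node} : T.left s = some t ↔ T.firstChildR s t :=
  successor?_eq_some fun _ _ _ h h' => h.2.2.trans h'.2.2.symm

lemma right_eq_some {s t : Node} : T.right s = some t ↔ T.nsR s t := by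
  refine successor?_eq_some ?_
  rintro _ _ _ ⟨-, -, u, i, rfl, rfl⟩ ⟨-, -, u', i', h, rfl⟩
  obtain ⟨rfl, rfl⟩ := List.append_singleton_inj.1 h
  rfl

lemma succR_iff {s t : Node} : T.succR s t ↔ T.left s = some t ∨ T.right s = some t := by
  rw [left_eq_some, right_eq_some, succR]

lemma succR.mem_dom {s t : Node} (h : T.succR s t) : s ∈ T.dom ∧ t ∈ T.dom := by
  rcases h with h | h <;> exact ⟨h.1, h.2.1⟩

lemma succR.weight_eq {s t : Node} (h : T.succR s t) : t.weight = s.weight + 1 := by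
  rcases h with ⟨-, -, rfl⟩ | ⟨-, -, u, i, rfl, rfl⟩ <;>
    simp only [Node.weight, List.length_append, List.length_singleton, List.sum_append,
      List.sum_singleton] <;> omega

lemma wellFounded_succR (T : UTree A) : WellFounded T.succR :=
  Subrelation.wf (fun h => by rw [InvImage, succR.weight_eq h]; exact Nat.lt_succ_self _)
    (InvImage.wf Node.weight Nat.lt_wfRel.wf)

lemma exists_succR_of_mem {t : Node} (ht : t ∈ T.dom) (hne : t ≠ []) : ∃ s, T.succR s t := by
  obtain ⟨u, i, rfl⟩ := (List.eq_nil_or_concat' t).resolve_left hne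
  obtain _ | i := i
  · exact ⟨u, .inl ⟨T.prefix_closed ht (List.prefix_append _ _), ht, rfl⟩⟩
  · exact ⟨u ++ [i], .inr ⟨T.sib_closed ht i.lt_succ_self, ht, u, i, rfl, rfl⟩⟩

/-- A bound on the height of the binary subtree at the slot `o`. A slot is a position in the binary
encoding: a node, or `none` for a missing successor. -/
def slotHeight (T : UTree A) : Option Node → ℕ
  | none => 0
  | some s => T.dom.sup Node.weight - s.weight + 1

lemma slotHeight_lt {s : Node} {o : Option Node} (h : ∀ t ∈ o, T.succR s t) :
    T.slotHeight o < T.slotHeight (some s) := by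
  obtain _ | t := o
  · simp [slotHeight]
  · have hle : t.weight ≤ T.dom.sup Node.weight :=
      Finset.le_sup (f := Node.weight) (h t rfl).mem_dom.2
    have := (h t rfl).weight_eq
    simp only [slotHeight]
    omega

lemma slotHeight_left_lt (s : Node) : T.slotHeight (T.left s) < T.slotHeight (some s) :=
  slotHeight_lt fun _ ht => succR_iff.2 (.inl ht)

lemma slotHeight_right_lt (s : Node) : T.slotHeight (T.right s) < T.slotHeight (some s) :=
  slotHeight_lt fun _ ht => succR_iff.2 (.inr ht)

@[elab_as_elim]
lemma slot_induction (T : UTree A) {p : Option Node → Prop} (none : p none)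
    (some : ∀ s, p (T.left s) → p (T.right s) → p (some s)) : ∀ o, p o
  | .none => none
  | .some s =>
    some s (slot_induction T none some (T.left s)) (slot_induction T none some (T.right s))
termination_by o => T.slotHeight o
decreasing_by exacts [slotHeight_left_lt s, slotHeight_right_lt s]

/-- The nodes of the binary subtree at `o`. -/
def below (T : UTree A) (o : Option Node) : Set Node :=
  {t | ∃ s ∈ o, ReflTransGen T.succR s t}

@[simp]
lemma below_none : T.below none = ∅ := by
  simp [below]

lemma below_some (s : Node) :
    T.below (some s) = insert s (T.below (T.left s) ∪ T.below (T.right s)) := by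
  ext t
  have hsplit : ReflTransGen T.succR s t ↔ t = s ∨ ∃ u, T.succR s u ∧ ReflTransGen T.succR u t := by
    rw [ReflTransGen.cases_head_iff, eq_comm]
  simp only [succR_iff, or_and_right, exists_or] at hsplit
  simpa only [below, Option.mem_def, Option.some_inj, exists_eq_left', Set.mem_insert_iff,
    Set.mem_union, Set.mem_ofPred_eq] using hsplit

lemma mem_below_self (s : Node) : s ∈ T.below (some s) :=
  ⟨s, rfl, .refl⟩

lemma below_left_subset (s : Node) : T.below (T.left s) ⊆ T.below (some s) := by
  rw [below_some]
  exact Set.subset_union_left.trans (Set.subset_insert _ _)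

lemma below_right_subset (s : Node) : T.below (T.right s) ⊆ T.below (some s) := by
  rw [below_some]
  exact Set.subset_union_right.trans (Set.subset_insert _ _)

lemma weight_le_of_reflTransGen {s t : Node} (h : ReflTransGen T.succR s t) :
    s.weight ≤ t.weight := by
  induction h with
  | refl => exact le_rfl
  | tail _ h ih => exact ih.trans (h.weight_eq ▸ Nat.le_succ _)

lemma notMem_below_of_succR {s : Node} {o : Option Node} (ho : ∀ t ∈ o, T.succR s t) :
    s ∉ T.below o := by
  rintro ⟨t, ht, hts⟩
  have := weight_le_of_reflTransGen hts
  have := (ho t ht).weight_eq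
  omega

lemma notMem_below_left (s : Node) : s ∉ T.below (T.left s) :=
  notMem_below_of_succR fun _ ht => succR_iff.2 (.inl ht)

lemma notMem_below_right (s : Node) : s ∉ T.below (T.right s) :=
  notMem_below_of_succR fun _ ht => succR_iff.2 (.inr ht)

lemma mem_below_of_succR {o : Option Node} {s t : Node} (hs : s ∈ T.below o) (h : T.succR s t) :
    t ∈ T.below o :=
  let ⟨u, hu, hpath⟩ := hs
  ⟨u, hu, hpath.tail h⟩

lemma mem_below_some_nil {t : Node} (ht : t ∈ T.dom) : t ∈ T.below (some []) := by
  induction t using T.wellFounded_succR.induction with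
  | _ t ih =>
    by_cases hne : t = []
    · exact hne ▸ mem_below_self _
    obtain ⟨s, hs⟩ := exists_succR_of_mem ht hne
    exact mem_below_of_succR (ih s hs hs.mem_dom.1) hs

lemma below_subset_dom {o : Option Node} (ho : ∀ s ∈ o, s ∈ T.dom) : T.below o ⊆ T.dom := by
  rintro t ⟨s, hs, hst⟩
  rcases ReflTransGen.cases_tail hst with rfl | ⟨u, -, hu⟩
  · exact ho _ hs
  · exact hu.mem_dom.2

lemma below_some_nil : T.below (some []) = T.dom :=
  (below_subset_dom fun _ h => Option.some_inj.1 h ▸ T.nil_mem).antisymm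
    fun _ => mem_below_some_nil

lemma reflTransGen_succR_concat {u t : Node} {i : ℕ}
    (h : ReflTransGen T.succR (u ++ [i]) t) : ∃ j, i ≤ j ∧ u ++ [j] <+: t := by
  induction h with
  | refl => exact ⟨i, le_rfl, List.prefix_rfl⟩
  | tail _ h ih =>
    obtain ⟨j, hij, hpre⟩ := ih
    rcases h with ⟨-, -, rfl⟩ | ⟨-, -, w, k, rfl, rfl⟩
    · exact ⟨j, hij, hpre.trans (List.prefix_append _ _)⟩
    · rcases List.prefix_concat_iff.1 hpre with heq | hpre
      · obtain ⟨rfl, rfl⟩ := List.append_singleton_inj.1 heq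
        exact ⟨j + 1, by omega, List.prefix_rfl⟩
      · exact ⟨j, hij, hpre.trans (List.prefix_append _ _)⟩

lemma prefix_of_mem_below_left {s t : Node} (h : t ∈ T.below (T.left s)) : s <+: t := by
  obtain ⟨s', hs', h⟩ := h
  obtain ⟨-, -, rfl⟩ := left_eq_some.1 hs'
  obtain ⟨j, -, hpre⟩ := reflTransGen_succR_concat h
  exact (List.prefix_append _ _).trans hpre

lemma disjoint_below (s : Node) : Disjoint (T.below (T.left s)) (T.below (T.right s)) := by
  refine Set.disjoint_left.2 fun t hl => ?_
  rintro ⟨s', hs', hr⟩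
  obtain ⟨-, -, u, i, rfl, rfl⟩ := right_eq_some.1 hs'
  obtain ⟨j, hij, hpre⟩ := reflTransGen_succR_concat hr
  have heq := List.prefix_of_prefix_length_le hpre (prefix_of_mem_below_left hl) (by simp)
  have := List.append_singleton_inj.1 (heq.eq_of_length (by simp))
  omega

lemma mem_below_left_of_isPrefix {s t : Node} (ht : t ∈ T.dom) (hpre : s <+: t) (hne : t ≠ s) :
    t ∈ T.below (T.left s) := by
  induction t using T.wellFounded_succR.induction with
  | _ t ih =>
    obtain ⟨u, i, rfl⟩ := (List.eq_nil_or_concat' t).resolve_left fun h => by simp_all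
    have hsu : s <+: u := (List.prefix_concat_iff.1 hpre).resolve_left (Ne.symm hne)
    obtain _ | i := i
    · have hu : T.firstChildR u (u ++ [0]) := ⟨T.prefix_closed ht (List.prefix_append _ _), ht, rfl⟩
      by_cases hus : u = s
      · exact ⟨_, left_eq_some.2 (hus ▸ hu), .refl⟩
      · exact mem_below_of_succR (ih u (.inl hu) hu.1 hsu hus) (.inl hu)
    · have hu : T.nsR (u ++ [i]) (u ++ [i + 1]) :=
        ⟨T.sib_closed ht i.lt_succ_self, ht, u, i, rfl, rfl⟩
      have hus : u ++ [i] ≠ s := fun h => by simpa [← h] using hsu.length_le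
      exact mem_below_of_succR
        (ih _ (.inr hu) hu.1 (hsu.trans (List.prefix_append _ _)) hus) (.inr hu)

lemma descR_iff {s t : Node} :
    T.descR s t ↔ s ∈ T.dom ∧ (t = s ∨ t ∈ T.below (T.left s)) := by
  constructor
  · rintro ⟨hs, ht, hpre⟩
    exact ⟨hs, or_iff_not_imp_left.2 (mem_below_left_of_isPrefix ht hpre)⟩
  · rintro ⟨hs, rfl | h⟩
    · exact ⟨hs, hs, List.prefix_rfl⟩
    · exact ⟨hs, below_subset_dom (fun _ h => (left_eq_some.1 h).2.1) h, prefix_of_mem_below_left h⟩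

lemma eq_or_sibR_iff {s t : Node} (hs : s ∈ T.dom) :
    (t = s ∨ T.sibR s t) ↔ t = s ∨ ∃ s', T.nsR s s' ∧ (t = s' ∨ T.sibR s' t) := by
  refine or_congr_right' fun hts => ⟨?_, ?_⟩
  · rintro ⟨-, ht, u, i, j, rfl, rfl, hij⟩
    have hlt : i < j := hij.lt_of_ne fun h => hts (h ▸ rfl)
    have hmid : u ++ [i + 1] ∈ T.dom := T.sib_mem_of_le ht hlt
    exact ⟨u ++ [i + 1], ⟨hs, hmid, u, i, rfl, rfl⟩, .inr ⟨hmid, ht, u, i + 1, j, rfl, rfl, hlt⟩⟩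
  · rintro ⟨s', ⟨-, hs', u, i, rfl, rfl⟩, rfl | h⟩
    · exact ⟨hs, hs', u, i, i + 1, rfl, rfl, i.le_succ⟩
    · obtain ⟨-, ht, u', k, j, hu, rfl, hkj⟩ := h
      obtain ⟨rfl, rfl⟩ := List.append_singleton_inj.1 hu
      exact ⟨hs, ht, u, i, j, rfl, rfl, by omega⟩

end UTree

end BinaryNavigation

/-! ### Tree automata -/

section Automata

variable {A Γ Δ S : Type}

/-- A deterministic bottom-up automaton running on the binary encoding of an unranked tree whose
nodes are lettered by `Γ`. -/
structure TreeAutomaton (Γ S : Type) where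
  leaf : S
  step : Γ → S → S → S
  accept : Set S

/-- The lettering of the nodes obtained from `c` by marking the nodes of `U`, where `h` tells how a
letter records the mark. -/
def mark (h : Γ → Prop → Δ) (c : Node → Γ) (U : Set Node) : Node → Δ :=
  fun t => h (c t) (t ∈ U)

namespace TreeAutomaton

variable (M : TreeAutomaton Γ S) (T : UTree A)

/-- The state reached by the run of `M` at a slot of the binary encoding of `T`. -/
noncomputable def eval (c : Node → Γ) : Option Node → S
  | none => M.leaf
  | some s => M.step (c s) (eval c (T.left s)) (eval c (T.right s))
termination_by o => T.slotHeight o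
decreasing_by exacts [T.slotHeight_left_lt s, T.slotHeight_right_lt s]

/-- `M` accepts the tree `T` lettered by `c`. -/
def Accepts (c : Node → Γ) : Prop :=
  M.eval T c (some []) ∈ M.accept

variable {T}

@[simp]
lemma eval_none (c : Node → Γ) : M.eval T c none = M.leaf := by
  rw [eval]

lemma eval_some (c : Node → Γ) (s : Node) :
    M.eval T c (some s) = M.step (c s) (M.eval T c (T.left s)) (M.eval T c (T.right s)) := by
  rw [eval]

lemma eval_congr {c c' : Node → Γ} {o : Option Node} (h : ∀ t ∈ T.below o, c t = c' t) :
    M.eval T c o = M.eval T c' o := by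
  induction o using T.slot_induction with
  | none => simp
  | some s ihl ihr =>
    rw [eval_some, eval_some, h s (T.mem_below_self s),
      ihl fun t ht => h t (T.below_left_subset s ht),
      ihr fun t ht => h t (T.below_right_subset s ht)]

section Mark

variable (M : TreeAutomaton Δ S) (h : Γ → Prop → Δ) (c : Node → Γ)

lemma eval_mark_congr {U U' : Set Node} {o : Option Node} (hU : ∀ t ∈ T.below o, t ∈ U ↔ t ∈ U') :
    M.eval T (mark h c U) o = M.eval T (mark h c U') o :=
  M.eval_congr fun t ht => congrArg (h (c t)) (propext (hU t ht))

lemma eval_mark_glue (s : Node) (b : Prop) {Ul Ur : Set Node} (hl : Ul ⊆ T.below (T.left s))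
    (hr : Ur ⊆ T.below (T.right s)) :
    M.eval T (mark h c ({t | t = s ∧ b} ∪ (Ul ∪ Ur))) (some s) =
      M.step (h (c s) b) (M.eval T (mark h c Ul) (T.left s))
        (M.eval T (mark h c Ur) (T.right s)) := by
  have hsl := T.notMem_below_left s
  have hsr := T.notMem_below_right s
  have hdisj := Set.disjoint_left.1 (T.disjoint_below s)
  rw [eval_some]
  congr 1
  · refine congrArg (h (c s)) (propext ?_)
    simp only [Set.mem_union, Set.mem_ofPred_eq, true_and]
    exact or_iff_left fun hs => hs.elim (hsl <| hl ·) (hsr <| hr ·)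
  · refine M.eval_mark_congr h c fun t ht => ?_
    simp only [Set.mem_union, Set.mem_ofPred_eq]
    grind
  · refine M.eval_mark_congr h c fun t ht => ?_
    simp only [Set.mem_union, Set.mem_ofPred_eq]
    grind

lemma eval_mark_some (s : Node) (U : Set Node) :
    M.eval T (mark h c U) (some s) = M.step (h (c s) (s ∈ U))
      (M.eval T (mark h c U) (T.left s)) (M.eval T (mark h c U) (T.right s)) :=
  M.eval_some _ _

lemma eval_mark_left {s : Node} {U : Set Node} (hU : U ⊆ T.below (T.left s)) :
    M.eval T (mark h c U) (some s) = M.step (h (c s) False)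
      (M.eval T (mark h c U) (T.left s)) (M.eval T (mark h c ∅) (T.right s)) := by
  simpa using M.eval_mark_glue h c s False hU (T.below _).empty_subset

lemma eval_mark_right {s : Node} {U : Set Node} (hU : U ⊆ T.below (T.right s)) :
    M.eval T (mark h c U) (some s) = M.step (h (c s) False)
      (M.eval T (mark h c ∅) (T.left s)) (M.eval T (mark h c U) (T.right s)) := by
  simpa using M.eval_mark_glue h c s False (T.below _).empty_subset hU

lemma eval_mark_singleton_self (s : Node) :
    M.eval T (mark h c {s}) (some s) = M.step (h (c s) True)
      (M.eval T (mark h c ∅) (T.left s)) (M.eval T (mark h c ∅) (T.right s)) := by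
  simpa using M.eval_mark_glue h c s True (T.below _).empty_subset (T.below _).empty_subset

end Mark

end TreeAutomaton

/-- The properties of lettered trees that are decided by a finite tree automaton. -/
def Recognizable (P : UTree A → (Node → Γ) → Prop) : Prop :=
  ∃ (S : Type) (_ : Finite S) (M : TreeAutomaton Γ S), ∀ T c, P T c ↔ M.Accepts T c

namespace Recognizable

open TreeAutomaton

variable {P P' : UTree A → (Node → Γ) → Prop}

lemma not (hP : Recognizable P) : Recognizable fun T c => ¬ P T c := by
  obtain ⟨S, hS, M, hM⟩ := hP
  let N : TreeAutomaton Γ S := { M with accept := M.acceptᶜ }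
  have heval (T : UTree A) (c) (o) : N.eval T c o = M.eval T c o := by
    induction o using T.slot_induction with
    | none => simp [N]
    | some s ihl ihr => rw [eval_some, eval_some, ihl, ihr]
  exact ⟨S, hS, N, fun T c => (hM T c).not.trans (by rw [Accepts, Accepts, heval]; rfl)⟩

lemma and (hP : Recognizable P) (hP' : Recognizable P') :
    Recognizable fun T c => P T c ∧ P' T c := by
  obtain ⟨S, hS, M, hM⟩ := hP
  obtain ⟨S', hS', M', hM'⟩ := hP'
  let N : TreeAutomaton Γ (S × S') :=
    { leaf := (M.leaf, M'.leaf)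
      step γ l r := (M.step γ l.1 r.1, M'.step γ l.2 r.2)
      accept := M.accept ×ˢ M'.accept }
  have heval (T : UTree A) (c) (o) : N.eval T c o = (M.eval T c o, M'.eval T c o) := by
    induction o using T.slot_induction with
    | none => simp [N]
    | some s ihl ihr => simp only [eval_some, ihl, ihr, N]
  exact ⟨S × S', inferInstance, N, fun T c =>
    (and_congr (hM T c) (hM' T c)).trans (by rw [Accepts, Accepts, Accepts, heval]; rfl)⟩

lemma root_letter (p : Γ → Prop) : Recognizable fun (_ : UTree A) c => p (c []) :=
  ⟨Prop, inferInstance, ⟨False, fun γ _ _ => p γ, {q | q}⟩, fun T c => by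
    rw [Accepts, eval_some]; rfl⟩

end Recognizable

namespace TreeAutomaton

/-- The automaton that runs `M` and also searches for a node whose letter and successor states
satisfy `p`. -/
def search (M : TreeAutomaton Γ S) (p : Γ → S → S → Prop) : TreeAutomaton Γ (S × Prop) where
  leaf := (M.leaf, False)
  step γ l r := (M.step γ l.1 r.1, p γ l.1 r.1 ∨ l.2 ∨ r.2)
  accept := {q | q.2}

lemma eval_search (M : TreeAutomaton Γ S) (p : Γ → S → S → Prop) (T : UTree A) (c : Node → Γ)
    (o : Option Node) : (M.search p).eval T c o = (M.eval T c o,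
      ∃ s ∈ T.below o, p (c s) (M.eval T c (T.left s)) (M.eval T c (T.right s))) := by
  induction o using T.slot_induction with
  | none => simp [search]
  | some s ihl ihr =>
    rw [eval_some, ihl, ihr, UTree.below_some]
    simp only [search, eval_some, Set.mem_insert_iff, Set.mem_union, or_and_right, exists_or,
      exists_eq_left]

/-- The automaton that searches for a letter satisfying `p`. -/
def occurs (p : Γ → Prop) : TreeAutomaton Γ (Unit × Prop) :=
  search ⟨(), fun _ _ _ => (), ∅⟩ fun γ _ _ => p γ

lemma eval_occurs (p : Γ → Prop) (T : UTree A) (c : Node → Γ) (o : Option Node) :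
    ((occurs p).eval T c o).2 ↔ ∃ s ∈ T.below o, p (c s) := by
  rw [occurs, eval_search]

/-- The automaton that searches for a letter satisfying `p` among the right siblings. -/
def occursRight (p : Γ → Prop) : TreeAutomaton Γ Prop where
  leaf := False
  step γ _ r := p γ ∨ r
  accept := ∅

lemma eval_occursRight (p : Γ → Prop) (T : UTree A) (c : Node → Γ) {s : Node} (hs : s ∈ T.dom) :
    (occursRight p).eval T c (some s) ↔ ∃ t, (t = s ∨ T.sibR s t) ∧ p (c t) := by
  induction ho : some s using T.slot_induction generalizing s with
  | none => simp at ho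
  | some s ihl ihr =>
    obtain rfl := Option.some_inj.1 ho
    have hright : (occursRight p).eval T c (T.right s) ↔
        ∃ s', T.nsR s s' ∧ ∃ t, (t = s' ∨ T.sibR s' t) ∧ p (c t) := by
      simp only [← UTree.right_eq_some]
      cases hr : T.right s with
      | none => simp [occursRight]
      | some s' => simpa [hr] using ihr (UTree.right_eq_some.1 hr).2.1 hr.symm
    simp only [UTree.eq_or_sibR_iff hs, or_and_right, exists_or, exists_eq_left, eval_some]
    refine or_congr_right (hright.trans ?_)
    grind

end TreeAutomaton

namespace Recognizable

open TreeAutomaton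

lemma exists_node [Finite S] (M : TreeAutomaton Γ S) (p : Γ → S → S → Prop) :
    Recognizable fun (T : UTree A) c =>
      ∃ s ∈ T.dom, p (c s) (M.eval T c (T.left s)) (M.eval T c (T.right s)) :=
  ⟨S × Prop, inferInstance, M.search p, fun T c => by
    rw [Accepts, eval_search, UTree.below_some_nil]; rfl⟩

lemma exists_letter (p : Γ → Prop) :
    Recognizable fun (T : UTree A) c => ∃ s ∈ T.dom, p (c s) :=
  exists_node ⟨(), fun _ _ _ => (), ∅⟩ fun γ _ _ => p γ

lemma exists_descR (p p' : Γ → Prop) :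
    Recognizable fun (T : UTree A) c => ∃ s t, T.descR s t ∧ p (c s) ∧ p' (c t) := by
  convert exists_node (A := A) (occurs p') (fun γ l _ => p γ ∧ (p' γ ∨ l.2)) using 5 with T c s
  simp only [eval_occurs, UTree.descR_iff]
  grind

lemma exists_sibR (p p' : Γ → Prop) :
    Recognizable fun (T : UTree A) c =>
      ∃ s ∈ T.dom, ∃ t, (t = s ∨ T.sibR s t) ∧ p (c s) ∧ p' (c t) := by
  convert exists_node (A := A) (occursRight p') (fun γ _ r => p γ ∧ (p' γ ∨ r)) using 3 with T c
  refine exists_congr fun s => and_congr_right fun hs => ?_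
  rw [show (p' (c s) ∨ (occursRight p').eval T c (T.right s)) ↔ _ from
    (iff_of_eq (eval_some _ _ _)).symm.trans (eval_occursRight p' T c hs)]
  grind

end Recognizable

namespace TreeAutomaton

variable (M : TreeAutomaton Δ S) (h : Γ → Prop → Δ)

/-- The subset automaton that guesses the marked nodes. -/
def guess : TreeAutomaton Γ (Set S) where
  leaf := {M.leaf}
  step γ L R := {q | ∃ b, ∃ l ∈ L, ∃ r ∈ R, M.step (h γ b) l r = q}
  accept := {L | ∃ q ∈ L, q ∈ M.accept}

lemma eval_guess (T : UTree A) (c : Node → Γ) (o : Option Node) :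
    (M.guess h).eval T c o = {q | ∃ U ⊆ T.below o, M.eval T (mark h c U) o = q} := by
  induction o using T.slot_induction with
  | none => ext q; simp [guess, eq_comm]
  | some s ihl ihr =>
    rw [eval_some, ihl, ihr]
    ext q
    constructor
    · rintro ⟨b, _, ⟨Ul, hl, rfl⟩, _, ⟨Ur, hr, rfl⟩, rfl⟩
      refine ⟨_, ?_, M.eval_mark_glue h c s b hl hr⟩
      rw [T.below_some, Set.insert_eq]
      exact Set.union_subset_union (fun t ht => ht.1) (Set.union_subset_union hl hr)
    · rintro ⟨U, -, rfl⟩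
      refine ⟨s ∈ U, _, ⟨U ∩ T.below (T.left s), Set.inter_subset_right, rfl⟩,
        _, ⟨U ∩ T.below (T.right s), Set.inter_subset_right, rfl⟩, ?_⟩
      rw [eval_mark_some]
      congr 1 <;> exact M.eval_mark_congr h c fun t ht => and_iff_left ht

/-- The automaton that guesses a single marked node. Its states are the state of `M` on the unmarked
tree together with the states that `M` can reach when one node is marked. -/
def guessOne : TreeAutomaton Γ (S × Set S) where
  leaf := (M.leaf, ∅)
  step γ l r := (M.step (h γ False) l.1 r.1,
    {q | M.step (h γ True) l.1 r.1 = q ∨ (∃ l' ∈ l.2, M.step (h γ False) l' r.1 = q) ∨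
      ∃ r' ∈ r.2, M.step (h γ False) l.1 r' = q})
  accept := {L | ∃ q ∈ L.2, q ∈ M.accept}

lemma eval_guessOne (T : UTree A) (c : Node → Γ) (o : Option Node) :
    (M.guessOne h).eval T c o = (M.eval T (mark h c ∅) o,
      {q | ∃ t ∈ T.below o, M.eval T (mark h c {t}) o = q}) := by
  induction o using T.slot_induction with
  | none => simp [guessOne]
  | some s ihl ihr =>
    have hleft (t) (ht : t ∈ T.below (T.left s)) :=
      M.eval_mark_left h c (Set.singleton_subset_iff.2 ht)
    have hright (t) (ht : t ∈ T.below (T.right s)) :=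
      M.eval_mark_right h c (Set.singleton_subset_iff.2 ht)
    have hself := M.eval_mark_singleton_self (T := T) h c s
    rw [eval_some, ihl, ihr, T.below_some]
    refine Prod.ext ?_ (Set.ext fun q => ?_)
    · simp [guessOne, eval_mark_some]
    · simp only [guessOne, Set.mem_ofPred_eq, Set.mem_insert_iff, Set.mem_union]
      grind

end TreeAutomaton

namespace Recognizable

open TreeAutomaton

variable {P : UTree A → (Node → Δ) → Prop} (h : Γ → Prop → Δ)

lemma exists_set (hP : Recognizable P) :
    Recognizable fun T c => ∃ U : Set Node, U ⊆ ↑T.dom ∧ P T (mark h c U) := by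
  obtain ⟨S, hS, M, hM⟩ := hP
  refine ⟨Set S, inferInstance, M.guess h, fun T c => ?_⟩
  simp only [hM, Accepts, eval_guess, UTree.below_some_nil]
  simp [guess]

lemma exists_mark (hP : Recognizable P) :
    Recognizable fun T c => ∃ s ∈ T.dom, P T (mark h c {s}) := by
  obtain ⟨S, hS, M, hM⟩ := hP
  refine ⟨S × Set S, inferInstance, M.guessOne h, fun T c => ?_⟩
  simp only [hM, Accepts, eval_guessOne, UTree.below_some_nil]
  simp [guessOne]

end Recognizable

end Automata

/-! ### From MSO to automata -/

section MSOToAutomata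

variable {A : Type}

/-- The letter of a node in the encoding of a valuation: its label, the first-order variables that
denote it, and the second-order variables that contain it. -/
abbrev Letter (A : Type) : Type :=
  A × Set ℕ × Set ℕ

namespace Letter

/-- Records whether the first-order variable `n` denotes the node. -/
def setFO (n : ℕ) (γ : Letter A) (b : Prop) : Letter A :=
  (γ.1, {k | k = n ∧ b ∨ k ≠ n ∧ k ∈ γ.2.1}, γ.2.2)

/-- Records whether the set variable `n` contains the node. -/
def setSO (n : ℕ) (γ : Letter A) (b : Prop) : Letter A :=
  (γ.1, γ.2.1, {k | k = n ∧ b ∨ k ≠ n ∧ k ∈ γ.2.2})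

end Letter

/-- The lettering of the nodes of `T` that encodes a valuation. -/
def letters (T : UTree A) (v : ℕ → Node) (V : ℕ → Set Node) (s : Node) : Letter A :=
  (T.label s, {n | v n = s}, {n | s ∈ V n})

lemma letters_update_left (T : UTree A) (v : ℕ → Node) (V : ℕ → Set Node) (n : ℕ) (s : Node) :
    letters T (Function.update v n s) V = mark (Letter.setFO n) (letters T v V) {s} := by
  ext t k
  · rfl
  · by_cases hk : k = n <;> simp [letters, mark, Letter.setFO, hk, eq_comm (a := s)]
  · rfl

lemma letters_update_right (T : UTree A) (v : ℕ → Node) (V : ℕ → Set Node) (n : ℕ) (U : Set Node) :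
    letters T v (Function.update V n U) = mark (Letter.setSO n) (letters T v V) U := by
  ext t k
  · rfl
  · rfl
  · by_cases hk : k = n <;> simp [letters, mark, Letter.setSO, hk]

namespace MSO

/-- The truth of `φ` is a recognizable property of the tree lettered by the valuation. -/
def IsRecognizable (φ : MSO A) : Prop :=
  ∃ P : UTree A → (Node → Letter A) → Prop, Recognizable P ∧
    ∀ T v V, (∀ n, v n ∈ T.dom) → (Sat T v V φ ↔ P T (letters T v V))

namespace IsRecognizable

lemma eq (x y : ℕ) : IsRecognizable (A := A) (.eq x y) :=
  ⟨_, .exists_letter fun γ => x ∈ γ.2.1 ∧ y ∈ γ.2.1, fun T v V hv => by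
    simp only [Sat, letters, Set.mem_ofPred_eq]
    grind⟩

lemma lab (a : A) (x : ℕ) : IsRecognizable (.lab a x) :=
  ⟨_, .exists_letter fun γ => x ∈ γ.2.1 ∧ γ.1 = a, fun T v V _ => by
    simp only [Sat, letters, Set.mem_ofPred_eq]
    grind⟩

lemma mem (X x : ℕ) : IsRecognizable (A := A) (.mem X x) :=
  ⟨_, .exists_letter fun γ => x ∈ γ.2.1 ∧ X ∈ γ.2.2, fun T v V hv => by
    simp only [Sat, letters, Set.mem_ofPred_eq]
    grind⟩

lemma desc (x y : ℕ) : IsRecognizable (A := A) (.desc x y) :=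
  ⟨_, .exists_descR (fun γ => x ∈ γ.2.1) (fun γ => y ∈ γ.2.1), fun T v V _ => by
    simp only [Sat, letters, Set.mem_ofPred_eq]
    grind⟩

lemma sib (x y : ℕ) : IsRecognizable (A := A) (.sib x y) := by
  refine ⟨_, (Recognizable.root_letter fun γ => x ∉ γ.2.1).and
    (.exists_sibR (fun γ => x ∈ γ.2.1) (fun γ => y ∈ γ.2.1)), fun T v V hv => ?_⟩
  have hroot : T.sibR (v x) (v y) ↔ v x ≠ [] ∧ (v y = v x ∨ T.sibR (v x) (v y)) := by
    constructor
    · intro h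
      obtain ⟨-, -, u, i, j, hx, -⟩ := id h
      exact ⟨by simp [hx], .inr h⟩
    · rintro ⟨hne, heq | h⟩
      · obtain ⟨u, i, hx⟩ := (List.eq_nil_or_concat' (v x)).resolve_left hne
        exact ⟨hv x, hv y, u, i, i, hx, heq.trans hx, le_rfl⟩
      · exact h
  rw [Sat, hroot]
  simp only [letters, Set.mem_ofPred_eq]
  grind

lemma not {φ : MSO A} (hφ : φ.IsRecognizable) : (MSO.not φ).IsRecognizable :=
  let ⟨_, hP, h⟩ := hφ
  ⟨_, hP.not, fun T v V hv => (h T v V hv).not⟩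

lemma and {φ ψ : MSO A} (hφ : φ.IsRecognizable) (hψ : ψ.IsRecognizable) :
    (MSO.and φ ψ).IsRecognizable :=
  let ⟨_, hP, h⟩ := hφ
  let ⟨_, hP', h'⟩ := hψ
  ⟨_, hP.and hP', fun T v V hv => and_congr (h T v V hv) (h' T v V hv)⟩

lemma exFO {φ : MSO A} (hφ : φ.IsRecognizable) (n : ℕ) : (MSO.exFO n φ).IsRecognizable := by
  obtain ⟨P, hP, h⟩ := hφ
  refine ⟨_, hP.exists_mark (Letter.setFO n), fun T v V hv => exists_congr fun s =>
    and_congr_right fun hs => ?_⟩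
  rw [h, letters_update_left]
  intro k
  rcases eq_or_ne k n with rfl | hk
  · simpa using hs
  · simpa [hk] using hv k

lemma exSO {φ : MSO A} (hφ : φ.IsRecognizable) (n : ℕ) : (MSO.exSO n φ).IsRecognizable := by
  obtain ⟨P, hP, h⟩ := hφ
  refine ⟨_, hP.exists_set (Letter.setSO n), fun T v V hv => exists_congr fun U =>
    and_congr_right fun _ => ?_⟩
  rw [h _ _ _ hv, letters_update_right]

end IsRecognizable

theorem isRecognizable (φ : MSO A) : φ.IsRecognizable := by
  induction φ with
  | eq x y => exact .eq x y
  | desc x y => exact .desc x y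
  | sib x y => exact .sib x y
  | lab a x => exact .lab a x
  | mem X x => exact .mem X x
  | not φ ih => exact ih.not
  | and φ ψ ihφ ihψ => exact ihφ.and ihψ
  | exFO n φ ih => exact ih.exFO n
  | exSO n φ ih => exact ih.exSO n

theorem DefinesU.exists_automaton {φ : MSO A} {Q : UTree A → Set Node} (hφ : φ.DefinesU Q) :
    ∃ (S : Type) (_ : Finite S) (M : TreeAutomaton (A × Prop) S),
      ∀ T, ∀ s ∈ T.dom, s ∈ Q T ↔ M.Accepts T (mark Prod.mk T.label {s}) := by
  obtain ⟨P, ⟨S, hS, M, hM⟩, hP⟩ := φ.isRecognizable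
  let h : A × Prop → Letter A := fun γ => (γ.1, {_n | γ.2}, ∅)
  let N : TreeAutomaton (A × Prop) S := { M with step := fun γ => M.step (h γ) }
  have heval (T : UTree A) (c) (o) : N.eval T c o = M.eval T (h ∘ c) o := by
    induction o using T.slot_induction with
    | none => simp [N]
    | some s ihl ihr => simp only [TreeAutomaton.eval_some, ihl, ihr]; rfl
  refine ⟨S, hS, N, fun T s hs => ?_⟩
  have hletters : letters T (fun _ => s) (fun _ => ∅) = h ∘ mark Prod.mk T.label {s} := by
    ext t k <;> simp [letters, h, mark, eq_comm]
  rw [hφ T (fun _ => s) (fun _ => ∅) s hs, Function.update_eq_self, hP T _ _ fun _ => hs, hM,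
    TreeAutomaton.Accepts, TreeAutomaton.Accepts, heval, hletters]

end MSO

end MSOToAutomata

/-! ### Systems of fixed point equations -/

section Bekic

variable {I α : Type*} [DecidableEq I] [CompleteLattice α] (Φ : (I → α) →o (I → α))

/-- The least solution of the equations `X i = Φ X i` for `i ∈ U`, where the other unknowns are
parameters with values given by `W`. -/
def lfpOn (U : Finset I) (W : I → α) : I → α :=
  OrderHom.lfp ⟨fun X => U.piecewise (Φ X) W,
    fun _ _ h => U.piecewise_le_piecewise (Φ.monotone h) le_rfl⟩

lemma piecewise_lfpOn (U : Finset I) (W : I → α) :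
    U.piecewise (Φ (lfpOn Φ U W)) W = lfpOn Φ U W :=
  OrderHom.map_lfp ⟨fun X => U.piecewise (Φ X) W, _⟩

lemma lfpOn_le {U : Finset I} {W X : I → α} (h : U.piecewise (Φ X) W ≤ X) : lfpOn Φ U W ≤ X :=
  OrderHom.lfp_le _ h

lemma lfpOn_of_mem {U : Finset I} {i : I} (hi : i ∈ U) (W : I → α) :
    lfpOn Φ U W i = Φ (lfpOn Φ U W) i := by
  conv_lhs => rw [← piecewise_lfpOn, U.piecewise_eq_of_mem _ _ hi]

lemma lfpOn_of_notMem {U : Finset I} {i : I} (hi : i ∉ U) (W : I → α) :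
    lfpOn Φ U W i = W i := by
  rw [← piecewise_lfpOn, U.piecewise_eq_of_notMem _ _ hi]

/-- **Bekić's principle** -/
theorem lfpOn_eq_sInf {U : Finset I} {i : I} (hi : i ∈ U) (W : I → α) :
    lfpOn Φ U W i = sInf {p | Φ (lfpOn Φ (U.erase i) (Function.update W i p)) i ≤ p} := by
  apply le_antisymm
  · refine le_sInf fun p hp => ?_
    set Y := lfpOn Φ (U.erase i) (Function.update W i p) with hY
    have hYi : Y i = p := by simp [hY, lfpOn_of_notMem]
    refine (lfpOn_le Φ (X := Y) fun j => ?_) i |>.trans_eq hYi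
    rcases eq_or_ne j i with rfl | hj
    · rw [U.piecewise_eq_of_mem _ _ hi, hYi]
      exact hp
    by_cases hjU : j ∈ U
    · rw [U.piecewise_eq_of_mem _ _ hjU, hY, lfpOn_of_mem Φ (Finset.mem_erase.2 ⟨hj, hjU⟩)]
    · simp [hjU, hY, lfpOn_of_notMem, hj]
  · set X := lfpOn Φ U W with hX
    refine sInf_le ((Φ.monotone (lfpOn_le Φ fun j => ?_) i).trans_eq (lfpOn_of_mem Φ hi W).symm)
    rcases eq_or_ne j i with rfl | hj
    · simp [hX]
    by_cases hjU : j ∈ U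
    · simp [hj, hjU, hX, ← lfpOn_of_mem]
    · simp [hj, hjU, hX, lfpOn_of_notMem]

end Bekic

section MuDefinable

variable {A R I : Type}

namespace MuForm

/-- A well-formed formula all of whose free variables occur only positively. -/
def IsPositive (φ : MuForm A R) : Prop :=
  φ.WF ∧ ∀ n, φ.pol n true

lemma sem_mu (T : UTree A) (rel : R → Node → Node → Prop) (V : ℕ → Set Node) (n : ℕ)
    (φ : MuForm A R) :
    (mu n φ).sem T rel V = sInf {P | φ.sem T rel (Function.update V n P) ≤ P} := by
  ext s
  simp [sem]

/-- The formula `μX.X`, which holds nowhere. -/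
def falsum : MuForm A R :=
  .mu 0 (.var 0)

/-- The formula that holds at every node. -/
def verum : MuForm A R :=
  .not falsum

lemma sem_falsum (T : UTree A) (rel : R → Node → Node → Prop) (V : ℕ → Set Node) :
    falsum.sem T rel V = ∅ :=
  Set.eq_empty_of_forall_notMem fun s hs => hs ∅ (by simp [sem])

lemma sem_verum (T : UTree A) (rel : R → Node → Node → Prop) (V : ℕ → Set Node) :
    verum.sem T rel V = T.dom := by
  ext s
  simp [verum, sem, sem_falsum]

lemma pol_falsum (n : ℕ) (b : Bool) : (falsum : MuForm A R).pol n b := by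
  simp only [falsum, pol]
  tauto

lemma wf_falsum : (falsum : MuForm A R).WF := by
  simp [falsum, WF, pol]

end MuForm

open MuForm

/-- The operators on `I`-indexed families of node sets that are defined by `μ`-calculus formulas, as
functions of formulas in which the argument formulas occur only positively. -/
structure MuDefinable (rel : UTree A → R → Node → Node → Prop)
    (Φ : UTree A → (I → Set Node) → Set Node) : Prop where
  monotone (T : UTree A) : Monotone (Φ T)
  exists_formula : ∃ F : (I → MuForm A R) → MuForm A R, ∀ X, (∀ i, (X i).IsPositive) →
    (F X).IsPositive ∧ ∀ T V, (F X).sem T (rel T) V = Φ T fun i => (X i).sem T (rel T) V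

namespace MuDefinable

variable {rel : UTree A → R → Node → Node → Prop} {Φ Ψ : UTree A → (I → Set Node) → Set Node}

lemma unknown (i : I) : MuDefinable rel fun _ X => X i :=
  ⟨fun _ _ _ h => h i, fun X => X i, fun _ hX => ⟨hX i, fun _ _ => rfl⟩⟩

lemma const {C : UTree A → Set Node} (φ : MuForm A R) (hφ : φ.IsPositive)
    (hC : ∀ T V, φ.sem T (rel T) V = C T) :
    MuDefinable rel fun T (_ : I → Set Node) => C T :=
  ⟨fun _ => monotone_const, fun _ => φ, fun _ _ => ⟨hφ, hC⟩⟩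

lemma empty : MuDefinable rel fun (_ : UTree A) (_ : I → Set Node) => ∅ :=
  const falsum ⟨wf_falsum, fun n => pol_falsum n _⟩ fun T V => sem_falsum T _ V

lemma label (a : A) :
    MuDefinable rel fun T (_ : I → Set Node) => {s | s ∈ T.dom ∧ T.label s = a} :=
  const (.lab a) ⟨trivial, fun _ => trivial⟩ fun _ _ => rfl

lemma noDia (r : R) : MuDefinable rel fun T (_ : I → Set Node) =>
    {s | s ∈ T.dom ∧ ¬ ∃ t ∈ T.dom, rel T r s t} :=
  const (.not (.dia r verum)) ⟨wf_falsum, fun n => pol_falsum n _⟩ fun T V => by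
    ext s
    simp +contextual [sem, sem_verum, and_comm]

lemma noDiaB (r : R) : MuDefinable rel fun T (_ : I → Set Node) =>
    {s | s ∈ T.dom ∧ ¬ ∃ t ∈ T.dom, rel T r t s} :=
  const (.not (.diaB r verum)) ⟨wf_falsum, fun n => pol_falsum n _⟩ fun T V => by
    ext s
    simp +contextual [sem, sem_verum, and_comm]

lemma union (hΦ : MuDefinable rel Φ) (hΨ : MuDefinable rel Ψ) :
    MuDefinable rel fun T X => Φ T X ∪ Ψ T X := by
  obtain ⟨hΦmono, F, hF⟩ := hΦ
  obtain ⟨hΨmono, G, hG⟩ := hΨ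
  refine ⟨fun T => (hΦmono T).sup (hΨmono T), fun X => .or (F X) (G X), fun X hX => ?_⟩
  obtain ⟨⟨hFwf, hFpol⟩, hFsem⟩ := hF X hX
  obtain ⟨⟨hGwf, hGpol⟩, hGsem⟩ := hG X hX
  exact ⟨⟨⟨hFwf, hGwf⟩, fun n => ⟨hFpol n, hGpol n⟩⟩, fun T V => by rw [sem, hFsem, hGsem]⟩

lemma inter (hΦ : MuDefinable rel Φ) (hΨ : MuDefinable rel Ψ) (hdom : ∀ T X, Φ T X ⊆ T.dom) :
    MuDefinable rel fun T X => Φ T X ∩ Ψ T X := by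
  obtain ⟨hΦmono, F, hF⟩ := hΦ
  obtain ⟨hΨmono, G, hG⟩ := hΨ
  refine ⟨fun T => (hΦmono T).inf (hΨmono T), fun X => .not (.or (.not (F X)) (.not (G X))),
    fun X hX => ?_⟩
  obtain ⟨⟨hFwf, hFpol⟩, hFsem⟩ := hF X hX
  obtain ⟨⟨hGwf, hGpol⟩, hGsem⟩ := hG X hX
  refine ⟨⟨⟨hFwf, hGwf⟩, fun n => ⟨hFpol n, hGpol n⟩⟩, fun T V => ?_⟩
  ext s
  have := @hdom T (fun i => (X i).sem T (rel T) V) s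
  simp only [sem, hFsem, hGsem, Set.mem_ofPred_eq, Set.mem_union, Set.mem_inter_iff,
    ← Finset.mem_coe]
  tauto

lemma dia (hΦ : MuDefinable rel Φ) (r : R) :
    MuDefinable rel fun T X => {s | s ∈ T.dom ∧ ∃ t, rel T r s t ∧ t ∈ Φ T X} := by
  obtain ⟨hmono, F, hF⟩ := hΦ
  refine ⟨fun T X Y h s ⟨hs, t, hr, ht⟩ => ⟨hs, t, hr, hmono T h ht⟩, fun X => .dia r (F X),
    fun X hX => ⟨(hF X hX).1, fun T V => ?_⟩⟩
  rw [sem, (hF X hX).2]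

lemma diaB (hΦ : MuDefinable rel Φ) (r : R) :
    MuDefinable rel fun T X => {s | s ∈ T.dom ∧ ∃ t, rel T r t s ∧ t ∈ Φ T X} := by
  obtain ⟨hmono, F, hF⟩ := hΦ
  refine ⟨fun T X Y h s ⟨hs, t, hr, ht⟩ => ⟨hs, t, hr, hmono T h ht⟩, fun X => .diaB r (F X),
    fun X hX => ⟨(hF X hX).1, fun T V => ?_⟩⟩
  rw [sem, (hF X hX).2]

lemma biUnion {ι : Type*} {s : Set ι} (hs : s.Finite)
    {Φ : ι → UTree A → (I → Set Node) → Set Node} (hΦ : ∀ k, MuDefinable rel (Φ k)) :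
    MuDefinable rel fun T X => ⋃ k ∈ s, Φ k T X := by
  induction s, hs using Set.Finite.induction_on with
  | empty => simpa using empty
  | insert _ _ ih => simpa using (hΦ _).union ih

lemma iUnion {ι : Sort*} [Finite ι] {Φ : ι → UTree A → (I → Set Node) → Set Node}
    (hΦ : ∀ k, MuDefinable rel (Φ k)) : MuDefinable rel fun T X => ⋃ k, Φ k T X := by
  convert biUnion (Set.finite_univ (α := PLift ι)) fun k => hΦ k.down using 3 with T X
  rw [Set.biUnion_univ, Set.iUnion_plift_down fun k => Φ k T X]

end MuDefinable

theorem exists_formula_lfpOn [DecidableEq I] {rel : UTree A → R → Node → Node → Prop}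
    {Φ : UTree A → (I → Set Node) →o (I → Set Node)}
    (hΦ : ∀ i, MuDefinable rel fun T X => Φ T X i) {e : I → ℕ} (he : e.Injective) (U : Finset I) :
    ∃ ψ : I → MuForm A R, (∀ i, (ψ i).IsPositive) ∧
      ∀ T V, (fun i => (ψ i).sem T (rel T) V) = lfpOn (Φ T) U (V ∘ e) := by
  choose F hF using fun i => (hΦ i).exists_formula
  induction U using Finset.strongInduction with
  | H U ih =>
    choose χ hχpos hχsem using fun i (hi : i ∈ U) => ih _ (U.erase_ssubset hi)
    refine ⟨fun i => if hi : i ∈ U then .mu (e i) (F i (χ i hi)) else .var (e i), fun i => ?_,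
      fun T V => funext fun i => ?_⟩
    · dsimp only
      split_ifs with hi
      · obtain ⟨hwf, hpol⟩ := (hF i (χ i hi) (hχpos i hi)).1
        exact ⟨⟨hpol _, hwf⟩, fun n => .inr (hpol n)⟩
      · exact ⟨trivial, fun n => .inl rfl⟩
    · dsimp only
      split_ifs with hi
      · simp only [sem_mu, lfpOn_eq_sInf _ hi, (hF i (χ i hi) (hχpos i hi)).2, hχsem i hi,
          Function.update_comp_eq_of_injective _ he]
      · rw [sem, lfpOn_of_notMem _ hi, Function.comp_apply]

theorem exists_formula_isFixedPt [Finite I] {rel : UTree A → R → Node → Node → Prop}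
    {Φ : UTree A → (I → Set Node) → I → Set Node}
    (hΦ : ∀ i, MuDefinable rel fun T X => Φ T X i) :
    ∃ ψ : I → MuForm A R, (∀ i, (ψ i).IsPositive) ∧
      ∀ T V, Function.IsFixedPt (Φ T) fun i => (ψ i).sem T (rel T) V := by
  classical
  cases nonempty_fintype I
  obtain ⟨e, he⟩ := exists_injective_nat I
  let Φ' (T : UTree A) : (I → Set Node) →o (I → Set Node) :=
    ⟨Φ T, fun _ _ h i => (hΦ i).monotone T h⟩
  obtain ⟨ψ, hpos, hsem⟩ := exists_formula_lfpOn (Φ := Φ') hΦ he Finset.univ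
  refine ⟨ψ, hpos, fun T V => ?_⟩
  rw [hsem, Function.IsFixedPt]
  exact (Finset.piecewise_univ _ _).symm.trans (piecewise_lfpOn (Φ' T) Finset.univ (V ∘ e))

end MuDefinable

/-! ### The equations that evaluate an automaton -/

section Evaluation

variable {A S I : Type}

namespace UTree

variable {T : UTree A}

lemma left_eq_some_iff_childR {s t : Node} :
    T.left s = some t ↔ T.childR s t ∧ ¬ ∃ u ∈ T.dom, T.nsR u t := by
  rw [left_eq_some]
  constructor
  · rintro ⟨hs, ht, rfl⟩
    refine ⟨⟨hs, ht, 0, rfl⟩, ?_⟩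
    rintro ⟨_, -, -, -, u, i, rfl, h⟩
    simp at h
  · rintro ⟨⟨hs, ht, i, rfl⟩, hfirst⟩
    obtain _ | i := i
    · exact ⟨hs, ht, rfl⟩
    · have hi := T.sib_closed ht i.lt_succ_self
      exact absurd ⟨_, hi, hi, ht, s, i, rfl, rfl⟩ hfirst

lemma left_eq_none_iff {s : Node} : T.left s = none ↔ ¬ ∃ t ∈ T.dom, T.childR s t := by
  simp only [Option.eq_none_iff_forall_ne_some, ne_eq, left_eq_some, not_exists, not_and]
  constructor
  · rintro h _ - ⟨hs, ht, i, rfl⟩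
    exact h _ ⟨hs, T.sib_mem_of_le ht i.zero_le, rfl⟩
  · rintro h _ ⟨hs, ht, rfl⟩
    exact h _ ht ⟨hs, ht, 0, rfl⟩

lemma right_eq_none_iff {s : Node} : T.right s = none ↔ ¬ ∃ t ∈ T.dom, T.nsR s t := by
  simp only [Option.eq_none_iff_forall_ne_some, ne_eq, right_eq_some, not_exists, not_and]
  exact ⟨fun h t _ => h t, fun h t ht => h t ht.2.1 ht⟩

lemma eq_nil_iff_of_mem {s : Node} (hs : s ∈ T.dom) : s = [] ↔ ¬ ∃ t ∈ T.dom, T.childR t s := by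
  constructor
  · rintro rfl ⟨_, -, -, -, i, h⟩
    simp at h
  · intro h
    by_contra hne
    obtain ⟨u, i, rfl⟩ := (List.eq_nil_or_concat' s).resolve_left hne
    have hu := T.prefix_closed hs (List.prefix_append _ _)
    exact h ⟨u, hu, hu, hs, i, rfl⟩

end UTree

namespace MuDefinable

variable {Φ : UTree A → (I → Set Node) → Set Node}

lemma root : MuDefinable ChNs.rel fun (_ : UTree A) (_ : I → Set Node) => {[]} := by
  convert noDiaB ChNs.ch using 3 with T
  ext s
  by_cases hs : s ∈ T.dom
  · simpa [hs, ChNs.rel] using UTree.eq_nil_iff_of_mem hs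
  · simpa [hs] using fun h : s = [] => hs (h ▸ T.nil_mem)

lemma left_none : MuDefinable ChNs.rel fun (T : UTree A) (_ : I → Set Node) =>
    {s | s ∈ T.dom ∧ T.left s = none} := by
  simp only [UTree.left_eq_none_iff]
  exact noDia ChNs.ch

lemma right_none : MuDefinable ChNs.rel fun (T : UTree A) (_ : I → Set Node) =>
    {s | s ∈ T.dom ∧ T.right s = none} := by
  simp only [UTree.right_eq_none_iff]
  exact noDia ChNs.ns

lemma preimage_left (hΦ : MuDefinable ChNs.rel Φ) :
    MuDefinable ChNs.rel fun T X => {s | ∃ t, T.left s = some t ∧ t ∈ Φ T X} := by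
  convert ((noDiaB ChNs.ns).inter hΦ fun _ _ _ h => h.1).dia ChNs.ch using 3 with T X
  ext s
  simp only [UTree.left_eq_some_iff_childR, Set.mem_inter_iff, Set.mem_ofPred_eq]
  exact ⟨fun ⟨t, ⟨h, hfirst⟩, ht⟩ => ⟨h.1, t, h, ⟨h.2.1, hfirst⟩, ht⟩,
    fun ⟨_, t, h, ⟨_, hfirst⟩, ht⟩ => ⟨t, ⟨h, hfirst⟩, ht⟩⟩

lemma preimage_right (hΦ : MuDefinable ChNs.rel Φ) :
    MuDefinable ChNs.rel fun T X => {s | ∃ t, T.right s = some t ∧ t ∈ Φ T X} := by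
  convert hΦ.dia ChNs.ns using 3 with T X
  ext s
  simp only [UTree.right_eq_some, Set.mem_ofPred_eq]
  exact ⟨fun ⟨t, h, ht⟩ => ⟨h.1, t, h, ht⟩, fun ⟨_, h⟩ => h⟩

lemma image_left (hΦ : MuDefinable ChNs.rel Φ) :
    MuDefinable ChNs.rel fun T X => {t | ∃ s, T.left s = some t ∧ s ∈ Φ T X} := by
  convert (noDiaB ChNs.ns).inter (hΦ.diaB ChNs.ch) (fun _ _ _ h => h.1) using 3 with T X
  ext t
  simp only [UTree.left_eq_some_iff_childR, Set.mem_inter_iff, Set.mem_ofPred_eq]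
  exact ⟨fun ⟨s, ⟨h, hfirst⟩, hs⟩ => ⟨⟨h.2.1, hfirst⟩, h.2.1, s, h, hs⟩,
    fun ⟨⟨_, hfirst⟩, _, s, h, hs⟩ => ⟨s, ⟨h, hfirst⟩, hs⟩⟩

lemma image_right (hΦ : MuDefinable ChNs.rel Φ) :
    MuDefinable ChNs.rel fun T X => {t | ∃ s, T.right s = some t ∧ s ∈ Φ T X} := by
  convert hΦ.diaB ChNs.ns using 3 with T X
  ext t
  simp only [UTree.right_eq_some, Set.mem_ofPred_eq]
  exact ⟨fun ⟨s, h, hs⟩ => ⟨h.2.1, s, h, hs⟩, fun ⟨_, h⟩ => h⟩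

end MuDefinable

namespace TreeAutomaton

variable (M : TreeAutomaton (A × Prop) S) (T : UTree A)

/-- The state reached by `M` on `T` with the nodes of `U` marked. -/
noncomputable def run (U : Set Node) : Option Node → S :=
  M.eval T (mark Prod.mk T.label U)

/-- `f` is a context of `s`: as long as only nodes below `s` are marked, `M` accepts if and only if
it reaches a state of `f` at `s`. -/
def IsContext (s : Node) (f : Set S) : Prop :=
  ∀ U ⊆ T.below (some s), M.run T U (some []) ∈ M.accept ↔ M.run T U (some s) ∈ f

/-- The state of the unmarked slot is `q`, read off a valuation `X` of the unknowns: `X (.inl q)`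
stands for the nodes with unmarked state `q`, and `X (.inr f)` for those with context `f`. -/
def Reaches (X : S ⊕ Set S → Set Node) : Option Node → S → Prop
  | none, q => q = M.leaf
  | some s, q => s ∈ X (.inl q)

/-- The nodes labelled `a` whose unmarked successor states are `l` and `r`. -/
def config (X : S ⊕ Set S → Set Node) (a : A) (l r : S) : Set Node :=
  {s | s ∈ T.dom ∧ T.label s = a} ∩
    ({s | s ∈ T.dom ∧ M.Reaches X (T.left s) l} ∩ {s | s ∈ T.dom ∧ M.Reaches X (T.right s) r})

/-- The equations for the unmarked states and the contexts of the nodes. -/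
def equations (X : S ⊕ Set S → Set Node) : S ⊕ Set S → Set Node
  | .inl q => ⋃ (a) (l) (r) (_ : M.step (a, False) l r = q), M.config T X a l r
  | .inr f =>
      (⋃ _ : f = M.accept, {[]}) ∪
      ((⋃ (a) (l) (r) (g) (_ : f = {q | M.step (a, False) q r ∈ g}),
        {t | ∃ s, T.left s = some t ∧ s ∈ M.config T X a l r ∩ X (.inr g)}) ∪
      (⋃ (a) (l) (r) (g) (_ : f = {q | M.step (a, False) l q ∈ g}),
        {t | ∃ s, T.right s = some t ∧ s ∈ M.config T X a l r ∩ X (.inr g)}))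

/-- The nodes that, when marked, are accepted by their context. -/
def selected (X : S ⊕ Set S → Set Node) : Set Node :=
  ⋃ (a) (l) (r) (f) (_ : M.step (a, True) l r ∈ f), M.config T X a l r ∩ X (.inr f)

section Definability

lemma muDefinable_reaches_left (q : S) : MuDefinable ChNs.rel fun (T : UTree A) X =>
    {s | s ∈ T.dom ∧ M.Reaches X (T.left s) q} := by
  convert (MuDefinable.iUnion fun _ : q = M.leaf => .left_none).union
    (MuDefinable.unknown (Sum.inl q)).preimage_left using 3 with T X
  ext s
  have hdom {t} (h : T.left s = some t) : s ∈ T.dom := (UTree.left_eq_some.1 h).1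
  cases h : T.left s <;> simp_all [Reaches, and_comm]

lemma muDefinable_reaches_right (q : S) : MuDefinable ChNs.rel fun (T : UTree A) X =>
    {s | s ∈ T.dom ∧ M.Reaches X (T.right s) q} := by
  convert (MuDefinable.iUnion fun _ : q = M.leaf => .right_none).union
    (MuDefinable.unknown (Sum.inl q)).preimage_right using 3 with T X
  ext s
  have hdom {t} (h : T.right s = some t) : s ∈ T.dom := (UTree.right_eq_some.1 h).1
  cases h : T.right s <;> simp_all [Reaches, and_comm]

lemma config_subset (X : S ⊕ Set S → Set Node) (a : A) (l r : S) : M.config T X a l r ⊆ T.dom :=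
  fun _ hs => hs.1.1

lemma muDefinable_config (a : A) (l r : S) :
    MuDefinable ChNs.rel fun (T : UTree A) X => M.config T X a l r :=
  (MuDefinable.label a).inter ((M.muDefinable_reaches_left l).inter (M.muDefinable_reaches_right r)
    fun _ _ _ h => h.1) fun _ _ _ h => h.1

lemma muDefinable_config_inter_context (a : A) (l r : S) (f : Set S) :
    MuDefinable ChNs.rel fun (T : UTree A) X => M.config T X a l r ∩ X (.inr f) :=
  (M.muDefinable_config a l r).inter (.unknown _) fun T X => M.config_subset T X a l r

variable [Finite A] [Finite S]

lemma muDefinable_equations (i : S ⊕ Set S) :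
    MuDefinable ChNs.rel fun (T : UTree A) X => M.equations T X i := by
  obtain q | f := i
  · exact .iUnion fun a => .iUnion fun l => .iUnion fun r => .iUnion fun _ =>
      M.muDefinable_config a l r
  · refine .union (.iUnion fun _ => .root) (.union ?_ ?_)
    · exact .iUnion fun a => .iUnion fun l => .iUnion fun r => .iUnion fun g => .iUnion fun _ =>
        (M.muDefinable_config_inter_context a l r g).image_left
    · exact .iUnion fun a => .iUnion fun l => .iUnion fun r => .iUnion fun g => .iUnion fun _ =>
        (M.muDefinable_config_inter_context a l r g).image_right

lemma muDefinable_selected : MuDefinable ChNs.rel fun (T : UTree A) X => M.selected T X :=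
  .iUnion fun a => .iUnion fun l => .iUnion fun r => .iUnion fun f => .iUnion fun _ =>
    M.muDefinable_config_inter_context a l r f

end Definability

section Contexts

variable {M T}

lemma isContext_nil : M.IsContext T [] M.accept :=
  fun _ _ => Iff.rfl

lemma IsContext.left {s t : Node} {g : Set S} (hg : M.IsContext T s g) (ht : T.left s = some t) :
    M.IsContext T t {q | M.step (T.label s, False) q (M.run T ∅ (T.right s)) ∈ g} := fun U hU => by
  rw [← ht] at hU ⊢
  rw [hg U (hU.trans (T.below_left_subset s)), run, eval_mark_left _ _ _ hU]
  rfl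

lemma IsContext.right {s t : Node} {g : Set S} (hg : M.IsContext T s g)
    (ht : T.right s = some t) :
    M.IsContext T t {q | M.step (T.label s, False) (M.run T ∅ (T.left s)) q ∈ g} := fun U hU => by
  rw [← ht] at hU ⊢
  rw [hg U (hU.trans (T.below_right_subset s)), run, eval_mark_right _ _ _ hU]
  rfl

lemma IsContext.mem_iff_accepts {s : Node} {f : Set S} (hf : M.IsContext T s f) :
    M.step (T.label s, True) (M.run T ∅ (T.left s)) (M.run T ∅ (T.right s)) ∈ f ↔
      M.Accepts T (mark Prod.mk T.label {s}) := by
  rw [run, ← M.eval_mark_singleton_self Prod.mk T.label s]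
  exact (hf {s} (Set.singleton_subset_iff.2 (T.mem_below_self s))).symm

end Contexts

section Solutions

variable {M T} {X : S ⊕ Set S → Set Node} (hX : Function.IsFixedPt (M.equations T) X)

include hX

lemma reaches_iff {o : Option Node} (ho : ∀ s ∈ o, s ∈ T.dom) (q : S) :
    M.Reaches X o q ↔ M.run T ∅ o = q := by
  induction o using T.slot_induction generalizing q with
  | none => simp [Reaches, run, eq_comm]
  | some s ihl ihr =>
    have hs := ho s rfl
    specialize ihl fun _ ht => (UTree.left_eq_some.1 ht).2.1
    specialize ihr fun _ ht => (UTree.right_eq_some.1 ht).2.1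
    rw [Reaches, ← hX.eq, run, eval_mark_some]
    simp [equations, config, ihl, ihr, hs, run]

lemma mem_config_iff {s : Node} (hs : s ∈ T.dom) {a : A} {l r : S} :
    s ∈ M.config T X a l r ↔
      T.label s = a ∧ M.run T ∅ (T.left s) = l ∧ M.run T ∅ (T.right s) = r := by
  simp only [config, reaches_iff hX fun _ ht => (UTree.left_eq_some.1 ht).2.1,
    reaches_iff hX fun _ ht => (UTree.right_eq_some.1 ht).2.1, Set.mem_inter_iff,
    Set.mem_ofPred_eq, hs, true_and]

lemma mem_context_iff {t : Node} {f : Set S} : t ∈ X (.inr f) ↔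
    (t = [] ∧ f = M.accept) ∨
    (∃ s g, T.left s = some t ∧ s ∈ X (.inr g) ∧
      f = {q | M.step (T.label s, False) q (M.run T ∅ (T.right s)) ∈ g}) ∨
    ∃ s g, T.right s = some t ∧ s ∈ X (.inr g) ∧
      f = {q | M.step (T.label s, False) (M.run T ∅ (T.left s)) q ∈ g} := by
  have hleft {s a l r} (h : T.left s = some t) :=
    mem_config_iff hX (UTree.left_eq_some.1 h).1 (a := a) (l := l) (r := r)
  have hright {s a l r} (h : T.right s = some t) :=
    mem_config_iff hX (UTree.right_eq_some.1 h).1 (a := a) (l := l) (r := r)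
  conv_lhs => rw [← hX.eq]
  simp only [equations, Set.mem_union, Set.mem_iUnion, Set.mem_singleton_iff, Set.mem_ofPred_eq,
    Set.mem_inter_iff, exists_prop]
  refine or_congr ?_ (or_congr ⟨?_, ?_⟩ ⟨?_, ?_⟩)
  · rw [and_comm]
  · rintro ⟨a, l, r, g, rfl, s, hst, hs, hg⟩
    obtain ⟨rfl, rfl, rfl⟩ := (hleft hst).1 hs
    exact ⟨s, g, hst, hg, rfl⟩
  · rintro ⟨s, g, hst, hg, rfl⟩
    exact ⟨_, _, _, g, rfl, s, hst, (hleft hst).2 ⟨rfl, rfl, rfl⟩, hg⟩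
  · rintro ⟨a, l, r, g, rfl, s, hst, hs, hg⟩
    obtain ⟨rfl, rfl, rfl⟩ := (hright hst).1 hs
    exact ⟨s, g, hst, hg, rfl⟩
  · rintro ⟨s, g, hst, hg, rfl⟩
    exact ⟨_, _, _, g, rfl, s, hst, (hright hst).2 ⟨rfl, rfl, rfl⟩, hg⟩

lemma isContext_of_mem {t : Node} {f : Set S} (ht : t ∈ X (.inr f)) : M.IsContext T t f := by
  induction t using T.wellFounded_succR.induction generalizing f with
  | _ t ih =>
    rcases (mem_context_iff hX).1 ht with ⟨rfl, rfl⟩ | ⟨s, g, hst, hs, rfl⟩ | ⟨s, g, hst, hs, rfl⟩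
    · exact isContext_nil
    · exact (ih s (UTree.succR_iff.2 (.inl hst)) hs).left hst
    · exact (ih s (UTree.succR_iff.2 (.inr hst)) hs).right hst

lemma exists_mem_context {t : Node} (ht : t ∈ T.dom) : ∃ f, t ∈ X (.inr f) := by
  induction t using T.wellFounded_succR.induction with
  | _ t ih =>
    by_cases hne : t = []
    · exact ⟨_, (mem_context_iff hX).2 (.inl ⟨hne, rfl⟩)⟩
    obtain ⟨s, hst⟩ := UTree.exists_succR_of_mem ht hne
    obtain ⟨g, hg⟩ := ih s hst hst.mem_dom.1
    rcases UTree.succR_iff.1 hst with hst | hst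
    · exact ⟨_, (mem_context_iff hX).2 (.inr (.inl ⟨s, g, hst, hg, rfl⟩))⟩
    · exact ⟨_, (mem_context_iff hX).2 (.inr (.inr ⟨s, g, hst, hg, rfl⟩))⟩

theorem mem_selected_iff {s : Node} (hs : s ∈ T.dom) :
    s ∈ M.selected T X ↔ M.Accepts T (mark Prod.mk T.label {s}) := by
  obtain ⟨f, hf⟩ := exists_mem_context hX hs
  have hctx {g} (hg : s ∈ X (.inr g)) := (isContext_of_mem hX hg).mem_iff_accepts
  simp only [selected, Set.mem_iUnion, Set.mem_inter_iff, mem_config_iff hX hs, exists_prop]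
  constructor
  · rintro ⟨a, l, r, g, hstep, ⟨rfl, rfl, rfl⟩, hg⟩
    exact (hctx hg).1 hstep
  · exact fun h => ⟨_, _, _, f, (hctx hf).2 h, ⟨rfl, rfl, rfl⟩, hf⟩

end Solutions

end TreeAutomaton

end Evaluation

/-- The unary MSO queries on ordered unranked Σ-trees are
precisely the unary queries defined by closed formulas of the full μ-calculus
`L_μ^full[≺_ch, ≺_ns]` (the μ-calculus with backward modalities). -/
theorem mso_iff_full_mu_calculus (A : Type) [Fintype A]
    (Q : UTree A → Set Node) (hQ : ∀ T, Q T ⊆ ↑T.dom) :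
    (∃ φ : MSO A, φ.DefinesU Q) ↔
      ∃ φ : MuForm A ChNs, φ.WF ∧
        ∀ (T : UTree A) (V : ℕ → Set Node) (s : Node), s ∈ T.dom →
          (s ∈ Q T ↔ s ∈ φ.sem T (ChNs.rel T) V) := by
  constructor
  · rintro ⟨φ, hφ⟩
    obtain ⟨S, _, M, hM⟩ := hφ.exists_automaton
    obtain ⟨ψ, hψpos, hψfix⟩ := exists_formula_isFixedPt M.muDefinable_equations
    obtain ⟨F, hF⟩ := M.muDefinable_selected.exists_formula
    obtain ⟨⟨hwf, -⟩, hsem⟩ := hF ψ hψpos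
    refine ⟨F ψ, hwf, fun T V s hs => ?_⟩
    rw [hM T s hs, hsem, TreeAutomaton.mem_selected_iff (hψfix T V) hs]
  · rintro ⟨φ, -, hφ⟩
    refine ⟨φ.toMSO 0, fun T v V s hs => ?_⟩
    rw [hφ T V s hs, φ.sat_toMSO T 0 V (Function.update_self ..) hs]

end UnrankedTrees
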